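/- arXiv:1308.0022 — 2 statements merged into one kernel-verified Lean document; each statement's English description precedes it below -/
import Mathlib

section
/- Let α be an irrational real number. Suppose f : ℂ² → ℂ is an entire function (complex-differentiable at every point) such that f(z + (1,0)) = f(z), f(z + (0,1)) = f(z), and f(z + (i, iα)) = f(z) for all z ∈ ℂ². Then f is constant. -/
/-! The proof uses lines in the direction `(1, α)`. Modulo the period lattice, every point of
`z ↦ (z, w + α z)` can be moved into a bounded region: a multiple of `(i, iα)` brings `Im z` into
`[0, 1)`, which also bounds the imaginary part of the second coordinate, and integer translations
bound the two real parts. By Liouville, `f` is constant on each such line, so `f` factors through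
`h w = f (0, w)`. The lattice makes `1` and `α` periods of `h`; as `α` is irrational they generate
a dense subgroup of `ℝ`, so every real number is a period of `h`. Hence `h' = 0` and `h` is
constant. -/

open Complex

/-- Liouville on the line through `(0, w)` in the direction `(1, α)`. -/
lemma apply_line_eq (α : ℝ) (f : ℂ × ℂ → ℂ) (hf : Differentiable ℂ f)
    (h1 : Function.Periodic f (1, 0)) (h2 : Function.Periodic f (0, 1))
    (h3 : Function.Periodic f (I, I * (α : ℂ))) (w z : ℂ) :
    f (z, w + α * z) = f (0, w) := by
  have hd : Differentiable ℂ fun z : ℂ => f (z, w + α * z) := by fun_prop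
  have hb : Bornology.IsBounded (Set.range fun z : ℂ => f (z, w + α * z)) := by
    refine ((isCompact_closedBall (0 : ℂ × ℂ) (2 + |w.im| + |α|)).image
      hf.continuous).isBounded.subset ?_
    rintro _ ⟨z, rfl⟩
    set u : ℂ × ℂ := (z, w + α * z) - ⌊z.im⌋ • ((I, I * (α : ℂ)) : ℂ × ℂ) with hu
    refine ⟨u - ⌊u.1.re⌋ • ((1, 0) : ℂ × ℂ) - ⌊u.2.re⌋ • ((0, 1) : ℂ × ℂ), ?_, ?_⟩
    · have hfr : ∀ x : ℝ, |x - ⌊x⌋| ≤ 1 := fun x => by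
        rw [abs_le]
        constructor <;> linarith [Int.floor_le x, Int.lt_floor_add_one x]
      have hα : |w.im + α * z.im - ⌊z.im⌋ * α| ≤ |w.im| + |α| := by
        calc _ = |w.im + α * (z.im - ⌊z.im⌋)| := by ring_nf
          _ ≤ |w.im| + |α * (z.im - ⌊z.im⌋)| := abs_add_le _ _
          _ ≤ _ := by
            rw [abs_mul]
            linarith [mul_le_mul_of_nonneg_left (hfr z.im) (abs_nonneg α)]
      have p1 := abs_nonneg w.im
      have p2 := abs_nonneg α
      rw [mem_closedBall_zero_iff, Prod.norm_def, max_le_iff]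
      constructor
      · refine (norm_le_abs_re_add_abs_im _).trans ?_
        have e1 := hfr u.1.re
        have e2 := hfr z.im
        simp [hu] at e1 e2 ⊢
        linarith
      · refine (norm_le_abs_re_add_abs_im _).trans ?_
        have e1 := hfr u.2.re
        simp [hu] at e1 hα ⊢
        linarith
    · rw [(h2.zsmul _).sub_eq, (h1.zsmul _).sub_eq, hu, (h3.zsmul _).sub_eq]
  simpa using hd.apply_eq_apply_of_bounded hb z 0

lemma periodic_real_of_irrational (α : ℝ) (hα : Irrational α) (h : ℂ → ℂ) (hc : Continuous h)
    (h1 : Function.Periodic h 1) (h2 : Function.Periodic h (α : ℂ)) (t : ℝ) :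
    Function.Periodic h (t : ℂ) := by
  intro w
  have hdense : Dense (AddSubgroup.closure {1, α} : Set ℝ) := by
    rw [Set.pair_comm, dense_addSubgroupClosure_pair_iff]
    simpa using hα
  have key : ∀ s ∈ AddSubgroup.closure {1, α}, Function.Periodic h ((s : ℝ) : ℂ) := by
    intro s hs
    induction hs using AddSubgroup.closure_induction with
    | mem x hx =>
      rcases hx with rfl | rfl
      · simpa using h1
      · exact h2
    | zero => simp [Function.Periodic]
    | add x y _ _ hx hy => simpa using hx.add_period hy
    | neg x _ hx => simpa using hx.neg
  exact congrFun (Continuous.ext_on (f := fun t : ℝ => h (w + t)) (g := fun _ => h w) hdense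
    (by fun_prop) continuous_const fun s hs => key s hs w) t

/-- The derivative can be computed along the real direction, in which `h` is constant. -/
lemma const_of_periodic_real (h : ℂ → ℂ) (hd : Differentiable ℂ h)
    (hp : ∀ t : ℝ, Function.Periodic h (t : ℂ)) (w : ℂ) : h w = h 0 := by
  refine is_const_of_deriv_eq_zero hd (fun w => ?_) w 0
  have hw : HasDerivAt (fun z => h (w + z)) (deriv h w) ((0 : ℝ) : ℂ) := by
    apply HasDerivAt.comp_const_add
    simpa using (hd w).hasDerivAt
  have hr := hw.comp_ofReal
  have he : (fun t : ℝ => h (w + t)) = fun _ => h w := funext fun t => hp t w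
  rw [he] at hr
  exact hr.unique (hasDerivAt_const _ _)

/-- An entire function on `ℂ²` invariant under translations by `(1,0)`, `(0,1)` and
`(i, iα)` with `α` irrational is constant. -/
theorem entire_triply_periodic_const
    (α : ℝ) (hα : Irrational α) (f : ℂ × ℂ → ℂ)
    (hf : Differentiable ℂ f)
    (h1 : ∀ z : ℂ × ℂ, f (z.1 + 1, z.2) = f z)
    (h2 : ∀ z : ℂ × ℂ, f (z.1, z.2 + 1) = f z)
    (h3 : ∀ z : ℂ × ℂ, f (z.1 + Complex.I, z.2 + Complex.I * (α : ℂ)) = f z) :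
    ∃ c : ℂ, ∀ z : ℂ × ℂ, f z = c := by
  have line := apply_line_eq α f hf (fun z => by simpa [Prod.add_def] using h1 z)
    (fun z => by simpa [Prod.add_def] using h2 z) (fun z => h3 z)
  have hd : Differentiable ℂ fun w : ℂ => f (0, w) := by fun_prop
  have p1 : Function.Periodic (fun w : ℂ => f (0, w)) 1 := fun w => h2 (0, w)
  -- `(0, w + α) ≡ (1, w + α)` modulo the lattice, and the latter lies on the line through `(0, w)`.
  have p2 : Function.Periodic (fun w : ℂ => f (0, w)) (α : ℂ) := fun w => by
    have e1 := h1 (0, w + α)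
    have e2 := line w 1
    simp only [zero_add, mul_one] at e1 e2
    exact e1.symm.trans e2
  refine ⟨f (0, 0), fun z => ?_⟩
  have e := line (z.2 - α * z.1) z.1
  rw [sub_add_cancel] at e
  exact e.trans (const_of_periodic_real _ hd
    (periodic_real_of_irrational α hα _ hd.continuous p1 p2) _)
end

section
/- Let 𝔰 be a finite-dimensional semisimple Lie algebra over ℂ, let 𝔯 be a 2-dimensional Lie algebra over ℂ, and let ρ : 𝔰 → Der(𝔯) be a Lie algebra homomorphism into the Lie algebra of derivations of 𝔯. If ρ is not identically zero, then 𝔯 is abelian. -/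
/-!
The argument plays the perfectness of `S` against the shape of a non-abelian 2-dimensional algebra.

A Lie algebra with trivial radical in characteristic zero is perfect
(`eq_zero_of_map_lie_eq_zero`), so any linear map on `S` that kills all brackets vanishes.

In dimension 2 all brackets are multiples of a single vector (`exists_lie_eq_smul`). If `R` is not
abelian, this vector `z = ⁅p, q⁆` is nonzero and every derivation scales it. Scalars commute, so
`x ↦ ρ x z` kills brackets and thus vanishes. A derivation `D` with `D z = 0` takes values in the
line `ℂ z`: if `D v` and `z` were independent, then `⁅D v, z⁆ = D ⁅v, z⁆ = 0` would force `R` to be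
abelian. Hence any two operators `ρ x`, `ρ y` compose to zero, so `x ↦ ρ x v` also kills
brackets for every `v`, and `ρ = 0`.
-/

/-- A Lie algebra with trivial radical is perfect, in the form: a linear map that vanishes on all
brackets is zero. -/
theorem eq_zero_of_map_lie_eq_zero
    {S : Type*} [LieRing S] [LieAlgebra ℂ S] [Module.Finite ℂ S]
    [LieAlgebra.HasTrivialRadical ℂ S]
    {V : Type*} [AddCommGroup V] [Module ℂ V] (f : S →ₗ[ℂ] V)
    (hf : ∀ x y : S, f ⁅x, y⁆ = 0) (x : S) : f x = 0 := by
  -- A complement of the derived ideal in the Boolean algebra of ideals is an abelian ideal.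
  have hD : LieAlgebra.derivedSeries ℂ S 1 = ⊤ := by
    obtain ⟨C, hC⟩ := exists_isCompl (LieAlgebra.derivedSeries ℂ S 1)
    have hab : IsLieAbelian C := by
      rw [LieSubmodule.lie_abelian_iff_lie_self_eq_bot, eq_bot_iff, ← hC.inf_eq_bot]
      refine le_inf ?_ (LieSubmodule.lie_le_right _ _)
      change _ ≤ ⁅(⊤ : LieIdeal ℂ S), (⊤ : LieIdeal ℂ S)⁆
      exact LieSubmodule.mono_lie le_top le_top
    have hbot : C = ⊥ :=
      (LieAlgebra.hasTrivialRadical_iff_no_abelian_ideals ℂ S).mp inferInstance C hab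
    simpa [hbot] using hC.sup_eq_top
  have hx : x ∈ LieAlgebra.derivedSeries ℂ S 1 := hD ▸ LieSubmodule.mem_top x
  replace hx : x ∈ Submodule.span ℂ {⁅x, y⁆ | (x : S) (y : S)} :=
    (LieAlgebra.coe_derivedSeries_one_eq ℂ S).le hx
  have hle : Submodule.span ℂ {⁅x, y⁆ | (x : S) (y : S)} ≤ LinearMap.ker f := by
    rw [Submodule.span_le]
    rintro _ ⟨a, b, rfl⟩
    exact hf a b
  exact hle hx

theorem exists_lie_eq_smul
    {R : Type*} [LieRing R] [LieAlgebra ℂ R]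
    (hR : Module.finrank ℂ R = 2) {u v : R} (h : LinearIndependent ℂ ![u, v]) (x y : R) :
    ∃ c : ℂ, ⁅x, y⁆ = c • ⁅u, v⁆ := by
  have hspan : Submodule.span ℂ {u, v} = ⊤ := by
    simpa [Set.pair_comm] using h.span_eq_top_of_card_eq_finrank (by simp [hR])
  have hx : x ∈ Submodule.span ℂ {u, v} := by simp [hspan]
  have hy : y ∈ Submodule.span ℂ {u, v} := by simp [hspan]
  obtain ⟨a, b, rfl⟩ := Submodule.mem_span_pair.mp hx
  obtain ⟨c, d, rfl⟩ := Submodule.mem_span_pair.mp hy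
  refine ⟨a * d - b * c, ?_⟩
  have hvu : ⁅v, u⁆ = -⁅u, v⁆ := (lie_skew v u).symm
  simp only [add_lie, lie_add, smul_lie, lie_smul, lie_self, hvu]
  module

/-- If a finite-dimensional complex semisimple Lie algebra `𝔰` (trivial radical) acts
nontrivially by derivations on a 2-dimensional complex Lie algebra `𝔯`, then `𝔯` is
abelian. -/
theorem abelian_of_nontrivial_semisimple_action_on_two_dim
    {S : Type*} [LieRing S] [LieAlgebra ℂ S] [Module.Finite ℂ S]
    (hS : LieAlgebra.radical ℂ S = ⊥)
    {R : Type*} [LieRing R] [LieAlgebra ℂ R] [Module.Finite ℂ R]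
    (hR : Module.finrank ℂ R = 2)
    (ρ : S →ₗ⁅ℂ⁆ LieDerivation ℂ R R)
    (hρ : ∃ x : S, ρ x ≠ 0) :
    IsLieAbelian R := by
  have : LieAlgebra.HasTrivialRadical ℂ S := ⟨hS⟩
  by_contra hab
  obtain ⟨p, q, hz⟩ : ∃ p q : R, ⁅p, q⁆ ≠ 0 := by
    by_contra! h
    exact hab ⟨h⟩
  have hpq : LinearIndependent ℂ ![p, q] := by
    have hp : p ≠ 0 := by
      rintro rfl
      simp at hz
    refine (LinearIndependent.pair_iff' hp).mpr ?_
    rintro a rfl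
    simp at hz
  have hbr := exists_lie_eq_smul hR hpq
  set z := ⁅p, q⁆ with hzdef
  have hscale (D : LieDerivation ℂ R R) : ∃ c : ℂ, D z = c • z := by
    obtain ⟨a, ha⟩ := hbr (D p) q
    obtain ⟨b, hb⟩ := hbr p (D q)
    refine ⟨b + a, ?_⟩
    rw [hzdef, LieDerivation.apply_lie_eq_add, ha, hb, add_smul]
  let ev (v : R) : S →ₗ[ℂ] R :=
    { toFun := fun x => ρ x v
      map_add' := fun x y => by simp
      map_smul' := fun c x => by simp }
  have hρz (x : S) : ρ x z = 0 := by
    refine eq_zero_of_map_lie_eq_zero (ev z) (fun x y => ?_) x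
    change ρ ⁅x, y⁆ z = 0
    obtain ⟨a, ha⟩ := hscale (ρ x)
    obtain ⟨b, hb⟩ := hscale (ρ y)
    rw [LieHom.map_lie, LieDerivation.commutator_apply, ha, hb, map_smul, map_smul, ha, hb,
      smul_comm, sub_self]
  have hline (x : S) (v : R) : ∃ c : ℂ, ρ x v = c • z := by
    by_contra! hne
    have hli : LinearIndependent ℂ ![z, ρ x v] :=
      (LinearIndependent.pair_iff' hz).mpr fun c => (hne c).symm
    have hcomm : ⁅z, ρ x v⁆ = 0 := by
      obtain ⟨c, hc⟩ := hbr z v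
      have h := (ρ x).apply_lie_eq_add z v
      rw [hc, map_smul, hρz] at h
      simpa using h.symm
    obtain ⟨c, hc⟩ := exists_lie_eq_smul hR hli p q
    rw [hcomm, smul_zero] at hc
    exact hz hc
  obtain ⟨x, hx⟩ := hρ
  refine hx (LieDerivation.ext fun v => ?_)
  refine eq_zero_of_map_lie_eq_zero (ev v) (fun x y => ?_) x
  change ρ ⁅x, y⁆ v = 0
  obtain ⟨a, ha⟩ := hline x v
  obtain ⟨b, hb⟩ := hline y v
  rw [LieHom.map_lie, LieDerivation.commutator_apply, ha, hb, map_smul, map_smul, hρz, hρz]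
  simp
end
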